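/- Let k ≥ 1 and let ρ ∈ (0,1) satisfy 2ρ + k/n ≥ 1. Then no coding scheme Enc : {0,1}^k × {0,1}^σ → {0,1}^n, Dec : {0,1}^n → {0,1}^k ∪ {⊥} is a strong (ρ, 3/16)-AMD code: there exist a message m ∈ {0,1}^k, a finite set 𝒵, a random variable Z on 𝒵 jointly distributed with the uniform randomness R on {0,1}^σ (possibly depending on additional randomness independent of R) with H̃∞(Enc(m,R) | Z) ≥ H∞(Enc(m,R)) − ρ·n, and a randomized function 𝖠 : 𝒵 → {0,1}^n whose internal randomness is independent of R, such that Pr[Dec(Enc(m,R) ⊕ 𝖠(Z)) ∉ {m, ⊥}] > 3/16, where ⊕ denotes bitwise XOR. -/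

import Mathlib

open scoped Classical BigOperators

/-- Probability of an event `E` under a finitely supported probability mass function `p`. -/
noncomputable def pr {Ω : Type*} [Fintype Ω] (p : Ω → ℝ) (E : Ω → Prop) : ℝ :=
  ∑ ω : Ω, if E ω then p ω else 0

/-- Min-entropy `H∞(X) = -log₂ max_x Pr[X = x]`. -/
noncomputable def minEntropy {Ω α : Type*} [Fintype Ω] [Fintype α]
    (p : Ω → ℝ) (X : Ω → α) : ℝ :=
  - Real.logb 2 (⨆ x : α, pr p (fun ω => X ω = x))

/-- Conditional (average) min-entropy
`H̃∞(X|Z) = -log₂ Σ_z Pr[Z=z] · max_x Pr[X=x | Z=z] = -log₂ Σ_z max_x Pr[X=x ∧ Z=z]`. -/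
noncomputable def condMinEntropy {Ω α β : Type*} [Fintype Ω] [Fintype α] [Fintype β]
    (p : Ω → ℝ) (X : Ω → α) (Z : Ω → β) : ℝ :=
  - Real.logb 2 (∑ z : β, ⨆ x : α, pr p (fun ω => X ω = x ∧ Z ω = z))

/-- A binary coding scheme `(Enc, Dec)` is a strong `(ρ, δ)`-AMD code: for every message
`m`, every probability space, every uniform randomness `R`, every leakage `Z` (jointly
distributed with `R`, possibly depending on additional randomness independent of `R`)
satisfying `H̃∞(Enc(m,R) | Z) ≥ H∞(Enc(m,R)) − ρ·n`, and every randomized adversary `A`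
whose internal random seed `W` is independent of `(R, Z)`,
`Pr[Dec(Enc(m,R) ⊕ A(Z)) ∉ {m, ⊥}] ≤ δ`, where `⊕` is bitwise XOR. -/
def IsStrongAMDBin (k σn n : ℕ)
    (Enc : (Fin k → Bool) × (Fin σn → Bool) → (Fin n → Bool))
    (Dec : (Fin n → Bool) → Option (Fin k → Bool)) (ρ δ : ℝ) : Prop :=
  ∀ (m : Fin k → Bool) (Ω : Type) [Fintype Ω] (p : Ω → ℝ),
    (∀ ω, 0 ≤ p ω) → (∑ ω : Ω, p ω) = 1 →
    ∀ (R : Ω → (Fin σn → Bool)),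
      (∀ r : Fin σn → Bool, pr p (fun ω => R ω = r) = 1 / (2 : ℝ) ^ σn) →
      ∀ (ZS : Type) [Fintype ZS] (Z : Ω → ZS) (T : Type) [Fintype T] (W : Ω → T),
        (∀ (r : Fin σn → Bool) (z : ZS) (w : T),
          pr p (fun ω => (R ω = r ∧ Z ω = z) ∧ W ω = w)
            = pr p (fun ω => R ω = r ∧ Z ω = z) * pr p (fun ω => W ω = w)) →
        condMinEntropy p (fun ω => Enc (m, R ω)) Z
          ≥ minEntropy p (fun ω => Enc (m, R ω)) - ρ * n →
        ∀ (A : ZS → T → (Fin n → Bool)),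
          pr p (fun ω => Dec (fun i => Bool.xor (Enc (m, R ω) i) (A (Z ω) (W ω) i))
              ∉ ({some m, none} : Set (Option (Fin k → Bool)))) ≤ δ

/-!
Leaking `Z` to one of `T` values lowers the min-entropy of a codeword by at most `log₂ T`, so the
adversary may choose any leakage function with at most `2 ^ (ρ n)` values.

If some message has at most `2 ^ (ρ n)` codewords, the adversary learns the codeword itself and
replaces it by a codeword of another message. Otherwise every message has many codewords, so the
set `B` of words that decode to a message other than `m` has density
`d ≥ (2 ^ k - 1) 2 ^ (ρ n - n)`. A uniformly random offset moves a fixed codeword into `B` with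
probability `d`, so by averaging there are `T = ⌊2 ^ (ρ n)⌋` offsets that all fail with probability
at most `(1 - d) ^ T ≤ exp (-T d)` over the randomness of the encoding of `m`. The leakage names an
offset that works, and `T d ≥ 1 / 4` follows from `2 ρ + k / n ≥ 1`.
-/

open Finset
open scoped symmDiff

section Probability

variable {Ω α β : Type*} [Fintype Ω] {p : Ω → ℝ}

theorem pr_nonneg (hp : ∀ ω, 0 ≤ p ω) (E : Ω → Prop) : 0 ≤ pr p E :=
  sum_nonneg fun ω _ => by split_ifs; exacts [hp ω, le_rfl]

theorem pr_mono (hp : ∀ ω, 0 ≤ p ω) {E F : Ω → Prop} (h : ∀ ω, E ω → F ω) :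
    pr p E ≤ pr p F :=
  sum_le_sum fun ω _ => by
    by_cases hE : E ω
    · simp only [hE, h ω hE, if_true, le_refl]
    · by_cases hF : F ω <;> simp [hE, hF, hp]

theorem le_pr (hp : ∀ ω, 0 ≤ p ω) {E : Ω → Prop} {ω : Ω} (hω : E ω) : p ω ≤ pr p E :=
  calc p ω = if E ω then p ω else 0 := (if_pos hω).symm
    _ ≤ pr p E := single_le_sum (f := fun ω => if E ω then p ω else 0)
        (fun ω _ => by split_ifs; exacts [hp ω, le_rfl]) (mem_univ ω)

theorem pr_add_pr_not (p : Ω → ℝ) (E : Ω → Prop) :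
    pr p E + pr p (fun ω => ¬ E ω) = ∑ ω, p ω := by
  rw [pr, pr, ← sum_add_distrib]
  exact sum_congr rfl fun ω _ => by by_cases hE : E ω <;> simp [hE]

theorem pr_true (p : Ω → ℝ) : pr p (fun _ => True) = ∑ ω, p ω := by
  simp [pr]

theorem sum_iSup_pr_pos [Finite α] [Fintype β] (hp : ∀ ω, 0 ≤ p ω) (hsum : 0 < ∑ ω, p ω)
    (X : Ω → α) (Z : Ω → β) : 0 < ∑ z, ⨆ x, pr p (fun ω => X ω = x ∧ Z ω = z) := by
  obtain ⟨ω, -, hω⟩ := (sum_pos_iff_of_nonneg fun ω _ => hp ω).1 hsum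
  refine sum_pos' (fun z _ => Real.iSup_nonneg fun x => pr_nonneg hp _)
    ⟨Z ω, mem_univ _, hω.trans_le ?_⟩
  exact le_ciSup_of_le (Finite.bddAbove_range _) (X ω) (le_pr hp ⟨rfl, rfl⟩)

theorem sum_iSup_pr_le [Finite α] [Fintype β] (hp : ∀ ω, 0 ≤ p ω) (X : Ω → α) (Z : Ω → β) :
    ∑ z, ⨆ x, pr p (fun ω => X ω = x ∧ Z ω = z)
      ≤ Fintype.card β * ⨆ x, pr p (fun ω => X ω = x) :=
  calc ∑ z, ⨆ x, pr p (fun ω => X ω = x ∧ Z ω = z)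
      ≤ ∑ _z : β, ⨆ x, pr p (fun ω => X ω = x) :=
        sum_le_sum fun _ _ => ciSup_mono (Finite.bddAbove_range _)
          fun _ => pr_mono hp fun _ => And.left
    _ = Fintype.card β * ⨆ x, pr p (fun ω => X ω = x) := by simp

theorem minEntropy_sub_logb_card_le_condMinEntropy [Fintype α] [Fintype β] (hp : ∀ ω, 0 ≤ p ω)
    (hsum : 0 < ∑ ω, p ω) (X : Ω → α) (Z : Ω → β) :
    minEntropy p X - Real.logb 2 (Fintype.card β) ≤ condMinEntropy p X Z := by
  have hpos := sum_iSup_pr_pos hp hsum X Z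
  have hle := sum_iSup_pr_le hp X Z
  have hprod := hpos.trans_le hle
  have hlog := Real.logb_le_logb_of_le one_lt_two hpos hle
  rw [Real.logb_mul (left_ne_zero_of_mul hprod.ne') (right_ne_zero_of_mul hprod.ne')] at hlog
  rw [minEntropy, condMinEntropy]
  linarith

end Probability

section Covering

variable {ι α β : Type*} [Fintype ι] [Fintype β]

theorem sum_pr_and_apply_notMem [Fintype α] (q : ι → ℝ) (P : ι → Prop) (e : ι → α ≃ β)
    (B : Finset β) : ∑ a, pr q (fun i => P i ∧ e i a ∉ B) = #Bᶜ * pr q P := by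
  have hcount (i : ι) :
      ∑ a, (if P i ∧ e i a ∉ B then q i else 0) = #Bᶜ * if P i then q i else 0 :=
    calc ∑ a, (if P i ∧ e i a ∉ B then q i else 0)
        = ∑ b, if P i ∧ b ∉ B then q i else 0 :=
          (e i).sum_comp fun b => if P i ∧ b ∉ B then q i else 0
      _ = ∑ b, if b ∈ Bᶜ then (if P i then q i else 0) else 0 := by
          simp only [mem_compl, ← ite_and, and_comm]
      _ = #Bᶜ * if P i then q i else 0 := by
          rw [sum_ite_mem, univ_inter, sum_const, nsmul_eq_mul]
  simp only [pr]
  rw [sum_comm, mul_sum]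
  exact sum_congr rfl fun i _ => by convert hcount i

theorem one_sub_dens_nonneg (B : Finset β) : (0 : ℝ) ≤ 1 - B.dens :=
  sub_nonneg.2 (mod_cast B.dens_le_one)

theorem exists_pr_and_apply_notMem_le [Nonempty α] (q : ι → ℝ) (P : ι → Prop) (e : ι → α ≃ β)
    (B : Finset β) :
    ∃ a, pr q (fun i => P i ∧ e i a ∉ B) ≤ (1 - B.dens) * pr q P := by
  rcases isEmpty_or_nonempty ι with hι | ⟨⟨i₀⟩⟩
  · exact ⟨Classical.arbitrary α, by simp [pr]⟩
  let _ : Fintype α := Fintype.ofEquiv β (e i₀).symm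
  have hα : (Fintype.card α : ℝ) = Fintype.card β := by rw [Fintype.card_congr (e i₀)]
  have hα₀ : (Fintype.card β : ℝ) ≠ 0 := hα ▸ by simp
  have havg : ∑ a, pr q (fun i => P i ∧ e i a ∉ B) ≤ ∑ _a : α, (1 - B.dens) * pr q P := by
    apply le_of_eq
    rw [sum_pr_and_apply_notMem, sum_const, card_univ, nsmul_eq_mul, hα, card_compl,
      Nat.cast_sub (card_le_univ B), nnratCast_dens]
    field_simp
  obtain ⟨a, -, ha⟩ := exists_le_of_sum_le univ_nonempty havg
  exact ⟨a, ha⟩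

theorem exists_pr_forall_apply_notMem_le [Nonempty α] (q : ι → ℝ) (e : ι → α ≃ β)
    (B : Finset β) (T : ℕ) :
    ∃ S : Fin T → α, pr q (fun i => ∀ t, e i (S t) ∉ B) ≤ (1 - B.dens) ^ T * ∑ i, q i := by
  induction T with
  | zero => exact ⟨Fin.elim0, by simp [pr]⟩
  | succ T ih =>
    obtain ⟨S, hS⟩ := ih
    obtain ⟨a, ha⟩ := exists_pr_and_apply_notMem_le q (fun i => ∀ t, e i (S t) ∉ B) e B
    refine ⟨Fin.cons a S, ?_⟩
    calc pr q (fun i => ∀ t, e i ((Fin.cons a S : Fin (T + 1) → α) t) ∉ B)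
        = pr q (fun i => (∀ t, e i (S t) ∉ B) ∧ e i a ∉ B) := by
          simp only [Fin.forall_fin_succ, Fin.cons_zero, Fin.cons_succ, and_comm]
      _ ≤ (1 - B.dens) * pr q (fun i => ∀ t, e i (S t) ∉ B) := ha
      _ ≤ (1 - B.dens) * ((1 - B.dens) ^ T * ∑ i, q i) :=
        mul_le_mul_of_nonneg_left hS (one_sub_dens_nonneg B)
      _ = (1 - B.dens) ^ (T + 1) * ∑ i, q i := by ring

theorem exists_le_pr_apply_mem [Nonempty α] (q : ι → ℝ) (e : ι → α ≃ β) (B : Finset β)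
    (T : ℕ) [NeZero T] :
    ∃ (S : Fin T → α) (Z : ι → Fin T),
      (1 - (1 - B.dens) ^ T) * ∑ i, q i ≤ pr q (fun i => e i (S (Z i)) ∈ B) := by
  obtain ⟨S, hS⟩ := exists_pr_forall_apply_notMem_le q e B T
  have hbest (i : ι) : ∃ t, (∃ s, e i (S s) ∈ B) → e i (S t) ∈ B := by
    by_cases h : ∃ s, e i (S s) ∈ B
    · exact h.imp fun _ ht _ => ht
    · exact ⟨0, fun h' => absurd h' h⟩
  choose Z hZ using hbest
  have hfail : (fun i => ¬ e i (S (Z i)) ∈ B) = fun i => ∀ t, e i (S t) ∉ B :=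
    funext fun i => propext ⟨fun h t ht => h (hZ i ⟨t, ht⟩), fun h => h (Z i)⟩
  refine ⟨S, Z, ?_⟩
  rw [← hfail] at hS
  linarith [pr_add_pr_not q fun i => e i (S (Z i)) ∈ B]

end Covering

section Coding

variable {M S C : Type*} {Enc : M × S → C} {Dec : C → Option M}

/-- The words that encode the message `m`. -/
noncomputable def codewords [Fintype S] (Enc : M × S → C) (m : M) : Finset C :=
  univ.image fun r => Enc (m, r)

/-- The words on which a tampering attack against the message `m` succeeds: those that decode to
a message other than `m`. -/
noncomputable def forgeries [Fintype C] (Dec : C → Option M) (m : M) : Finset C :=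
  {y | Dec y ∉ ({some m, none} : Set (Option M))}

theorem mem_codewords [Fintype S] (Enc : M × S → C) (m : M) (r : S) :
    Enc (m, r) ∈ codewords Enc m :=
  mem_image_of_mem _ (mem_univ r)

theorem mem_forgeries [Fintype C] {m : M} {y : C} :
    y ∈ forgeries Dec m ↔ Dec y ∉ ({some m, none} : Set (Option M)) := by
  simp only [forgeries, mem_filter_univ]

theorem decode_of_mem_codewords [Fintype S] (hcode : ∀ m r, Dec (Enc (m, r)) = some m) {m : M}
    {y : C} (hy : y ∈ codewords Enc m) : Dec y = some m := by
  obtain ⟨r, -, rfl⟩ := mem_image.1 hy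
  exact hcode m r

theorem codewords_subset_forgeries [Fintype S] [Fintype C]
    (hcode : ∀ m r, Dec (Enc (m, r)) = some m) {m m' : M} (hne : m' ≠ m) :
    codewords Enc m' ⊆ forgeries Dec m := fun y hy => by
  simp [mem_forgeries, decode_of_mem_codewords hcode hy, hne]

theorem disjoint_codewords [Fintype S] (hcode : ∀ m r, Dec (Enc (m, r)) = some m) {m m' : M}
    (hne : m ≠ m') : Disjoint (codewords Enc m) (codewords Enc m') :=
  disjoint_left.2 fun _ hy hy' => hne <| Option.some.inj <|
    (decode_of_mem_codewords hcode hy).symm.trans (decode_of_mem_codewords hcode hy')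

theorem mul_le_card_forgeries [Fintype M] [Fintype S] [Fintype C]
    (hcode : ∀ m r, Dec (Enc (m, r)) = some m) {L : ℝ} (hL : ∀ m, L ≤ #(codewords Enc m))
    (m : M) : (Fintype.card M - 1) * L ≤ #(forgeries Dec m) := by
  have hsub : (univ.erase m).biUnion (codewords Enc) ⊆ forgeries Dec m :=
    biUnion_subset.2 fun _ hm' => codewords_subset_forgeries hcode (ne_of_mem_erase hm')
  have hcard : #((univ.erase m).biUnion (codewords Enc))
      = ∑ m' ∈ univ.erase m, #(codewords Enc m') :=
    card_biUnion fun _ _ _ _ => disjoint_codewords hcode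
  calc (Fintype.card M - 1) * L = ∑ _m' ∈ univ.erase m, L := by
        rw [sum_const, nsmul_eq_mul, cast_card_erase_of_mem (mem_univ m), card_univ]
    _ ≤ ∑ m' ∈ univ.erase m, (#(codewords Enc m') : ℝ) := sum_le_sum fun m' _ => hL m'
    _ ≤ #(forgeries Dec m) := by exact_mod_cast hcard ▸ card_le_card hsub

theorem card_message_le [Fintype M] [Nonempty S] [Fintype C]
    (hcode : ∀ m r, Dec (Enc (m, r)) = some m) : Fintype.card M ≤ Fintype.card C :=
  let r : S := Classical.arbitrary S
  Fintype.card_le_of_injective (fun m => Enc (m, r)) fun m m' h =>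
    Option.some.inj <| (hcode m r).symm.trans <| (congrArg Dec h).trans (hcode m' r)

end Coding

theorem sum_one_div_two_pow (s : ℕ) : ∑ _r : Fin s → Bool, 1 / (2 : ℝ) ^ s = 1 := by
  simp

namespace IsStrongAMDBin

variable {k σn n : ℕ} {ρ δ : ℝ} {Enc : (Fin k → Bool) × (Fin σn → Bool) → (Fin n → Bool)}
  {Dec : (Fin n → Bool) → Option (Fin k → Bool)}

theorem pr_tamper_mem_forgeries_le (h : IsStrongAMDBin k σn n Enc Dec ρ δ) (m : Fin k → Bool)
    {ZS : Type} [Fintype ZS] (hZS : (Fintype.card ZS : ℝ) ≤ 2 ^ (ρ * n))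
    (Z : (Fin σn → Bool) → ZS) (A : ZS → Fin n → Bool) :
    pr (fun _ : Fin σn → Bool => 1 / (2 : ℝ) ^ σn)
      (fun r => Enc (m, r) ∆ A (Z r) ∈ forgeries Dec m) ≤ δ := by
  have hp : ∀ r : Fin σn → Bool, 0 ≤ (fun _ => 1 / (2 : ℝ) ^ σn) r := fun _ => by positivity
  have hcard : (0 : ℝ) < Fintype.card ZS :=
    Nat.cast_pos.2 (Fintype.card_pos_iff.2 ⟨Z fun _ => false⟩)
  have hlog : Real.logb 2 (Fintype.card ZS) ≤ ρ * n :=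
    (Real.logb_le_iff_le_rpow one_lt_two hcard).2 hZS
  have hent := minEntropy_sub_logb_card_le_condMinEntropy hp
    (by rw [sum_one_div_two_pow]; exact one_pos) (fun r => Enc (m, r)) Z
  have hxor (x a : Fin n → Bool) : x ∆ a = fun i => Bool.xor (x i) (a i) :=
    funext fun i => Bool.symmDiff_eq_xor (x i) (a i)
  simp only [mem_forgeries, hxor]
  exact h m _ _ hp (sum_one_div_two_pow σn) id (fun r => by simp [pr]) ZS Z Unit (fun _ => ())
    (fun r z w => by simp [pr_true]) (by simp only [id]; linarith) fun z _ => A z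

theorem rpow_lt_card_codewords (h : IsStrongAMDBin k σn n Enc Dec ρ δ) (hk : 1 ≤ k) (hδ : δ < 1)
    (hcode : ∀ m r, Dec (Enc (m, r)) = some m) (m : Fin k → Bool) :
    2 ^ (ρ * n) < (#(codewords Enc m) : ℝ) := by
  by_contra! hle
  have : Nonempty (Fin k) := ⟨⟨0, hk⟩⟩
  obtain ⟨m', hm'⟩ := exists_ne m
  set y := Enc (m', fun _ => false)
  have hy : y ∈ forgeries Dec m :=
    codewords_subset_forgeries hcode hm' (mem_codewords Enc m' _)
  have hattack := h.pr_tamper_mem_forgeries_le m (ZS := codewords Enc m) (by simpa using hle)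
    (fun r => ⟨Enc (m, r), mem_codewords Enc m r⟩) (fun z => z.1 ∆ y)
  simp only [symmDiff_symmDiff_cancel_left, hy, pr_true, sum_one_div_two_pow] at hattack
  exact hattack.not_gt hδ

theorem one_sub_exp_le (h : IsStrongAMDBin k σn n Enc Dec ρ δ) (m : Fin k → Bool) {T : ℕ}
    [NeZero T] (hT : (T : ℝ) ≤ 2 ^ (ρ * n)) :
    1 - Real.exp (-(T * (forgeries Dec m).dens)) ≤ δ := by
  set d : ℝ := ((forgeries Dec m).dens : ℝ)
  have hpow : (1 - d) ^ T ≤ Real.exp (-(T * d)) :=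
    calc (1 - d) ^ T ≤ Real.exp (-d) ^ T :=
          pow_le_pow_left₀ (one_sub_dens_nonneg _) (Real.one_sub_le_exp_neg d) T
      _ = Real.exp (-(T * d)) := by rw [← Real.exp_nat_mul, mul_neg]
  obtain ⟨S, Z, hSZ⟩ := exists_le_pr_apply_mem (fun _ : Fin σn → Bool => 1 / (2 : ℝ) ^ σn)
    (fun r => (symmDiff_right_involutive (Enc (m, r))).toPerm) (forgeries Dec m) T
  rw [sum_one_div_two_pow, mul_one] at hSZ
  have hattack := h.pr_tamper_mem_forgeries_le m (by simpa using hT) Z S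
  exact (sub_le_sub_left hpow 1).trans (hSZ.trans hattack)

end IsStrongAMDBin

theorem two_pow_le_rpow_mul_rpow_mul_two_pow {k n : ℕ} {ρ : ℝ} (hn : 0 < n)
    (hrate : 1 ≤ 2 * ρ + (k : ℝ) / n) :
    (2 : ℝ) ^ n ≤ 2 ^ (ρ * n) * 2 ^ (ρ * n) * 2 ^ k := by
  have hn' : (0 : ℝ) < n := Nat.cast_pos.2 hn
  have hexp : (n : ℝ) ≤ ρ * n + ρ * n + k := by
    have := mul_le_mul_of_nonneg_right hrate hn'.le
    rw [add_mul, div_mul_cancel₀ _ hn'.ne'] at this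
    linarith
  calc (2 : ℝ) ^ n = 2 ^ (n : ℝ) := (Real.rpow_natCast 2 n).symm
    _ ≤ 2 ^ (ρ * n + ρ * n + k) := Real.rpow_le_rpow_of_exponent_le one_le_two hexp
    _ = 2 ^ (ρ * n) * 2 ^ (ρ * n) * 2 ^ k := by
      rw [Real.rpow_add two_pos, Real.rpow_add two_pos, Real.rpow_natCast]

theorem quarter_mul_le_natFloor_mul {L K N b : ℝ} (hL : 1 ≤ L) (hK : 2 ≤ K)
    (hN : N ≤ L * L * K) (hb : (K - 1) * L ≤ b) : 1 / 4 * N ≤ ⌊L⌋₊ * b :=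
  calc 1 / 4 * N ≤ 1 / 4 * (L * L * K) := by gcongr
    _ = L / 2 * (K / 2 * L) := by ring
    _ ≤ L / 2 * ((K - 1) * L) := by gcongr; linarith
    _ ≤ ⌊L⌋₊ * b := mul_le_mul (Nat.div_two_lt_floor hL).le hb (by nlinarith) (by positivity)

theorem three_sixteenths_lt_one_sub_exp : (3 / 16 : ℝ) < 1 - Real.exp (-(1 / 4)) := by
  have hexp : Real.exp (-(1 / 4)) ≤ 4 / 5 := by
    rw [Real.exp_neg, inv_le_comm₀ (Real.exp_pos _) (by norm_num)]
    linarith [Real.add_one_le_exp (1 / 4 : ℝ)]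
  linarith

theorem stmt14_general (k σn n : ℕ) (hk : 1 ≤ k) (ρ δ : ℝ) (hδ : δ < 1 - Real.exp (-(1 / 4)))
    (hrate : 2 * ρ + (k : ℝ) / (n : ℝ) ≥ 1)
    (Enc : (Fin k → Bool) × (Fin σn → Bool) → (Fin n → Bool))
    (Dec : (Fin n → Bool) → Option (Fin k → Bool))
    (hcode : ∀ m r, Dec (Enc (m, r)) = some m) :
    ¬ IsStrongAMDBin k σn n Enc Dec ρ δ := by
  intro hamd
  have hkn : k ≤ n := by
    simpa [Nat.pow_le_pow_iff_right one_lt_two] using card_message_le hcode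
  have hn : 0 < n := hk.trans hkn
  have hρ : 0 ≤ ρ := by
    linarith [div_le_one_of_le₀ (Nat.cast_le (α := ℝ).2 hkn) n.cast_nonneg]
  set L : ℝ := 2 ^ (ρ * n)
  have hL : 1 ≤ L := Real.one_le_rpow one_le_two (by positivity)
  have : NeZero ⌊L⌋₊ := ⟨(Nat.floor_pos.2 hL).ne'⟩
  let m : Fin k → Bool := fun _ => false
  have hδ₁ : δ < 1 := hδ.trans (sub_lt_self 1 (Real.exp_pos _))
  have hB : ((2 : ℝ) ^ k - 1) * L ≤ #(forgeries Dec m) := by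
    simpa using mul_le_card_forgeries hcode
      (fun m => (hamd.rpow_lt_card_codewords hk hδ₁ hcode m).le) m
  have hTd : 1 / 4 ≤ ⌊L⌋₊ * ((forgeries Dec m).dens : ℝ) := by
    have := quarter_mul_le_natFloor_mul hL (le_self_pow₀ one_le_two (by lia))
      (two_pow_le_rpow_mul_rpow_mul_two_pow hn hrate) hB
    rw [nnratCast_dens, ← mul_div_assoc, le_div_iff₀ (by positivity)]
    simpa using this
  have hexp := Real.exp_le_exp.2 (neg_le_neg hTd)
  linarith [hamd.one_sub_exp_le m (Nat.floor_le (zero_le_one.trans hL))]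

/-- for `k ≥ 1` and `ρ ∈ (0,1)` with `2ρ + k/n ≥ 1`, no binary coding
scheme is a strong `(ρ, 3/16)`-AMD code. -/
theorem stmt14 (k σn n : ℕ) (hk : 1 ≤ k)
    (ρ : ℝ) (hρ0 : 0 < ρ) (hρ1 : ρ < 1)
    (hrate : 2 * ρ + (k : ℝ) / (n : ℝ) ≥ 1)
    (Enc : (Fin k → Bool) × (Fin σn → Bool) → (Fin n → Bool))
    (Dec : (Fin n → Bool) → Option (Fin k → Bool))
    (hcode : ∀ m r, Dec (Enc (m, r)) = some m) :
    ¬ IsStrongAMDBin k σn n Enc Dec ρ (3 / 16) := by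
  exact stmt14_general k σn n hk ρ (3 / 16) three_sixteenths_lt_one_sub_exp hrate Enc Dec hcode
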